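/- Let c > 0, α ∈ (0,1) and λ > 0, set q_n = 1 − c/n^α, and let (M_n) be a sequence of integers with 1 ≤ M_n ≤ n−1 such that lim_{n→∞} (n − M_n)/n^α = λ. Then lim_{n→∞} 𝒫_n^{q_n}(S(n,M_n)) = cλ e^{−cλ}. -/

import Mathlib

open Finset Filter

/-- The number of inversions of a permutation of `Fin n`. -/
def invCount (n : ℕ) (σ : Equiv.Perm (Fin n)) : ℕ :=
  (Finset.univ.filter (fun p : Fin n × Fin n => p.1 < p.2 ∧ σ p.2 < σ p.1)).card

/-- Normalization constant of the Mallows distribution: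
`Z_n(q) = ∑_{σ ∈ S_n} q^{inv σ}`. -/
noncomputable def mallowsZ (n : ℕ) (q : ℝ) : ℝ :=
  ∑ σ : Equiv.Perm (Fin n), q ^ invCount n σ

/-- The Mallows probability of a set `A` of permutations:
`P_n^q(A) = (∑_{σ ∈ A} q^{inv σ}) / Z_n(q)`. -/
noncomputable def mallowsProb (n : ℕ) (q : ℝ) (A : Finset (Equiv.Perm (Fin n))) : ℝ :=
  (∑ σ ∈ A, q ^ invCount n σ) / mallowsZ n q

/-- The success event for the strategy `S(n,M)`.  Positions are indexed by `Fin n`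
(the index `i : Fin n` represents the `(i+1)`-st arriving item) and ranks are the
values of `σ` (the value `n-1`, i.e. the top of `Fin n`, represents the highest
rank `n`).  For `M ≥ 1` the strategy succeeds iff for some position `j` with
`(j:ℕ) ≥ M` (i.e. item number `j+1 ≥ M+1`) the item at position `j` has the top
rank and the maximum rank among the items strictly before position `j` equals the
maximum rank among the first `M` items.  For `M = 0` it succeeds iff the first
item has top rank. -/
def winEvent (n M : ℕ) : Finset (Equiv.Perm (Fin n)) :=
  if M = 0 then
    Finset.univ.filter (fun σ => ∀ i : Fin n, (i : ℕ) = 0 → (σ i : ℕ) = n - 1)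
  else
    Finset.univ.filter (fun σ => ∃ j : Fin n, M ≤ (j : ℕ) ∧ (σ j : ℕ) = n - 1 ∧
      (Finset.univ.filter (fun i : Fin n => i < j)).sup (fun i => (σ i : ℕ)) =
      (Finset.univ.filter (fun i : Fin n => (i : ℕ) < M)).sup (fun i => (σ i : ℕ)))

/-- `𝒫_n^q(S(n,M))`, the success probability of the strategy `S(n,M)` under the
Mallows distribution with parameter `q`. -/
noncomputable def succProb (n M : ℕ) (q : ℝ) : ℝ := mallowsProb n q (winEvent n M)

/-!
Reveal the relative rank of the last arrival: under the Mallows law it is the maximum with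
probability `1 / [n]_q`, where `[n]_q = 1 + q + ⋯ + q ^ (n - 1)`, independently of the relative
order of the others, which is again Mallows distributed. If the last item is not the maximum, its
arrival changes neither whether the strategy succeeds nor whether the maximum is among the first `M`
arrivals. If it is, then the strategy succeeds exactly when the best earlier item is among the first
`M` arrivals. Solving the two resulting recursions in the number `k` of arrivals after the first `M`
gives `𝒫 = q ^ k * [M]_q / [M + k]_q * q⁻¹ * ∑ i < k, 1 / [M + i]_q`.

Put `x = 1 - q`, and let `x → 0`, `k x → μ`, `M x → ∞`. Then `q ^ k → exp (-μ)`, while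
`x [m]_q = 1 - q ^ m → 1` uniformly in `m ≥ M`, so the ratio tends to `1` and the sum to `μ`.
-/

lemma sup_eq_sup_iff_exists_forall_le {ι α : Type*} [LinearOrder α] [OrderBot α] {s t : Finset ι}
    (hts : t ⊆ s) (ht : t.Nonempty) (f : ι → α) :
    s.sup f = t.sup f ↔ ∃ k ∈ t, ∀ i ∈ s, f i ≤ f k := by
  rw [← (sup_mono hts).ge_iff_eq', Finset.sup_le_iff]
  constructor
  · intro h
    obtain ⟨k, hk, hsup⟩ := exists_mem_eq_sup t ht f
    exact ⟨k, hk, hsup ▸ h⟩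
  · rintro ⟨k, hk, h⟩ i hi
    exact (h i hi).trans (le_sup hk)

/-- The arrival order obtained from `τ` by letting one more item arrive, of final rank `v`; the
relative order of the earlier items is that of `τ`. -/
def appendRank {n : ℕ} (v : Fin (n + 1)) (τ : Equiv.Perm (Fin n)) : Equiv.Perm (Fin (n + 1)) :=
  ((finSuccEquiv' (Fin.last n)).trans (Equiv.optionCongr τ)).trans (finSuccEquiv' v).symm

section appendRank

variable {n : ℕ}

@[simp]
lemma appendRank_last (v : Fin (n + 1)) (τ : Equiv.Perm (Fin n)) :
    appendRank v τ (Fin.last n) = v := by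
  simp [appendRank]

@[simp]
lemma appendRank_castSucc (v : Fin (n + 1)) (τ : Equiv.Perm (Fin n)) (i : Fin n) :
    appendRank v τ i.castSucc = v.succAbove (τ i) := by
  simp [appendRank, finSuccEquiv'_last_apply_castSucc]

lemma appendRank_bijective :
    Function.Bijective fun p : Fin (n + 1) × Equiv.Perm (Fin n) => appendRank p.1 p.2 := by
  refine (Fintype.bijective_iff_injective_and_card _).2
    ⟨?_, by simp [Fintype.card_perm, Nat.factorial_succ]⟩
  rintro ⟨v, τ⟩ ⟨w, ρ⟩ h
  obtain rfl : v = w := by simpa using DFunLike.congr_fun h (Fin.last n)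
  have hτρ : τ = ρ := Equiv.ext fun i => by simpa using DFunLike.congr_fun h i.castSucc
  rw [hτρ]

lemma invCount_eq_sum (σ : Equiv.Perm (Fin n)) :
    invCount n σ = ∑ i, ∑ j, if i < j ∧ σ j < σ i then 1 else 0 := by
  rw [invCount, card_filter, Fintype.sum_prod_type]

lemma card_lt_succAbove (v : Fin (n + 1)) (τ : Equiv.Perm (Fin n)) :
    #{i | v < v.succAbove (τ i)} = n - v := by
  calc #{i | v < v.succAbove (τ i)} = ∑ i, if v < appendRank v τ i then 1 else 0 := by
        rw [card_filter, Fin.sum_univ_castSucc]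
        simp only [appendRank_castSucc, appendRank_last, lt_irrefl, if_false, add_zero]
    _ = #(Ioi v) := by
        rw [Equiv.sum_comp (appendRank v τ) fun w => if v < w then 1 else 0, ← card_filter,
          filter_lt_eq_Ioi]
    _ = n - v := by simp

lemma invCount_appendRank (v : Fin (n + 1)) (τ : Equiv.Perm (Fin n)) :
    invCount (n + 1) (appendRank v τ) = invCount n τ + (n - v) := by
  simp only [invCount_eq_sum, Fin.sum_univ_castSucc, appendRank_last, appendRank_castSucc,
    Fin.succAbove_lt_succAbove_iff, Fin.castSucc_lt_castSucc_iff, Fin.castSucc_lt_last, true_and,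
    (Fin.le_last _).not_gt, false_and, if_false, sum_const_zero, add_zero, sum_add_distrib]
  rw [← card_filter, card_lt_succAbove]

end appendRank

/-- The `q`-integer `[n]_q = 1 + q + ⋯ + q ^ (n - 1)`, which normalises the law of the relative rank
of the last of `n` arrivals. -/
def qInteger (q : ℝ) (n : ℕ) : ℝ := ∑ i ∈ range n, q ^ i

lemma qInteger_succ (q : ℝ) (n : ℕ) : qInteger q (n + 1) = q * qInteger q n + 1 :=
  geom_sum_succ

lemma qInteger_pos {q : ℝ} (hq : 0 < q) {n : ℕ} (hn : 0 < n) : 0 < qInteger q n :=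
  geom_sum_pos hq.le hn.ne'

lemma qInteger_mono {q : ℝ} (hq : 0 ≤ q) : Monotone (qInteger q) := fun _ _ h =>
  sum_le_sum_of_subset_of_nonneg (range_mono h) fun _ _ _ => pow_nonneg hq _

lemma one_sub_mul_qInteger (q : ℝ) (n : ℕ) : (1 - q) * qInteger q n = 1 - q ^ n :=
  mul_neg_geom_sum q n

lemma sum_pow_sub_val (q : ℝ) (n : ℕ) : ∑ v : Fin n, q ^ (n - (v : ℕ)) = q * qInteger q n := by
  rw [← Equiv.sum_comp Fin.revPerm, qInteger, mul_sum, ← Fin.sum_univ_eq_sum_range (q * q ^ ·)]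
  refine sum_congr rfl fun v _ => ?_
  rw [← pow_succ', Fin.revPerm_apply, Fin.val_rev]
  congr 1
  omega

section Mallows

variable {n : ℕ}

lemma sum_pow_invCount_succ (q : ℝ) {A : Finset (Equiv.Perm (Fin (n + 1)))}
    {B C : Finset (Equiv.Perm (Fin n))}
    (hB : ∀ (v : Fin n) τ, appendRank v.castSucc τ ∈ A ↔ τ ∈ B)
    (hC : ∀ τ, appendRank (Fin.last n) τ ∈ A ↔ τ ∈ C) :
    ∑ σ ∈ A, q ^ invCount (n + 1) σ =
      q * qInteger q n * ∑ τ ∈ B, q ^ invCount n τ + ∑ τ ∈ C, q ^ invCount n τ := by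
  calc ∑ σ ∈ A, q ^ invCount (n + 1) σ
    _ = ∑ σ, if σ ∈ A then q ^ invCount (n + 1) σ else 0 := by simp only [sum_ite_mem, univ_inter]
    _ = ∑ v, ∑ τ, if appendRank v τ ∈ A then q ^ (n - (v : ℕ)) * q ^ invCount n τ else 0 := by
        simp only [← appendRank_bijective.sum_comp, Fintype.sum_prod_type, invCount_appendRank,
          pow_add, mul_comm]
    _ = (∑ v : Fin n, q ^ (n - (v : ℕ))) * ∑ τ ∈ B, q ^ invCount n τ +
          ∑ τ ∈ C, q ^ invCount n τ := by
        simp [Fin.sum_univ_castSucc, hB, hC, sum_ite_mem, sum_mul_sum]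
    _ = _ := by rw [sum_pow_sub_val]

lemma mallowsZ_succ (n : ℕ) (q : ℝ) : mallowsZ (n + 1) q = qInteger q (n + 1) * mallowsZ n q := by
  rw [mallowsZ, sum_pow_invCount_succ q (B := univ) (C := univ) (by simp) (by simp), qInteger_succ,
    mallowsZ]
  ring

lemma mallowsZ_pos (n : ℕ) {q : ℝ} (hq : 0 < q) : 0 < mallowsZ n q :=
  sum_pos (fun _ _ => pow_pos hq _) univ_nonempty

lemma mallowsProb_univ (n : ℕ) {q : ℝ} (hq : 0 < q) : mallowsProb n q univ = 1 :=
  div_self (mallowsZ_pos n hq).ne'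

lemma mallowsProb_empty (n : ℕ) (q : ℝ) : mallowsProb n q ∅ = 0 := by
  simp [mallowsProb]

lemma mallowsProb_succ (q : ℝ) {A : Finset (Equiv.Perm (Fin (n + 1)))}
    {B C : Finset (Equiv.Perm (Fin n))}
    (hB : ∀ (v : Fin n) τ, appendRank v.castSucc τ ∈ A ↔ τ ∈ B)
    (hC : ∀ τ, appendRank (Fin.last n) τ ∈ A ↔ τ ∈ C) :
    mallowsProb (n + 1) q A =
      (q * qInteger q n * mallowsProb n q B + mallowsProb n q C) / qInteger q (n + 1) := by
  simp only [mallowsProb, mallowsZ_succ, sum_pow_invCount_succ q hB hC]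
  ring

end Mallows

section Events

variable {n M : ℕ}

lemma val_apply_eq_iff_forall_le (σ : Equiv.Perm (Fin n)) (k : Fin n) :
    (σ k : ℕ) = n - 1 ↔ ∀ i, σ i ≤ σ k := by
  have hn : n - 1 < n := Nat.sub_one_lt_of_lt k.isLt
  rw [σ.forall_congr_right (q := (· ≤ σ k))]
  exact ⟨fun h w => by omega, fun h => le_antisymm (by omega) (h ⟨n - 1, hn⟩)⟩

lemma val_castSucc_succAbove_eq_iff (v w : Fin n) :
    (v.castSucc.succAbove w : ℕ) = n ↔ (w : ℕ) = n - 1 := by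
  grind [Fin.succAbove]

/-- The event that the item of top rank is among the first `M` arrivals; it governs the success of
the strategy when one more item arrives and outranks all the others. -/
def earlyTopEvent (n M : ℕ) : Finset (Equiv.Perm (Fin n)) :=
  {σ | ∃ k : Fin n, (k : ℕ) < M ∧ (σ k : ℕ) = n - 1}

lemma appendRank_last_notMem_earlyTopEvent (hMn : M ≤ n) (τ : Equiv.Perm (Fin n)) :
    appendRank (Fin.last n) τ ∉ earlyTopEvent (n + 1) M := by
  simp [earlyTopEvent, Fin.exists_fin_succ', (τ _).isLt.ne, hMn]

lemma appendRank_castSucc_mem_earlyTopEvent (v : Fin n) (τ : Equiv.Perm (Fin n)) :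
    appendRank v.castSucc τ ∈ earlyTopEvent (n + 1) M ↔ τ ∈ earlyTopEvent n M := by
  simp [earlyTopEvent, Fin.exists_fin_succ', val_castSucc_succAbove_eq_iff, v.isLt.ne]

lemma mem_winEvent (hM : 0 < M) (σ : Equiv.Perm (Fin n)) :
    σ ∈ winEvent n M ↔ ∃ j : Fin n, M ≤ (j : ℕ) ∧ (σ j : ℕ) = n - 1 ∧
      ∃ k : Fin n, (k : ℕ) < M ∧ ∀ i < j, σ i ≤ σ k := by
  rw [winEvent, if_neg hM.ne', mem_filter_univ]
  refine exists_congr fun j => and_congr_right fun hMj => and_congr_right fun _ => ?_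
  rw [sup_eq_sup_iff_exists_forall_le]
  · simp
  · exact monotone_filter_right _ fun i _ (hi : i < M) => Fin.lt_def.2 (hi.trans_le hMj)
  · exact ⟨⟨0, by omega⟩, by simpa⟩

lemma appendRank_last_mem_winEvent (hM : 0 < M) (hMn : M ≤ n) (τ : Equiv.Perm (Fin n)) :
    appendRank (Fin.last n) τ ∈ winEvent (n + 1) M ↔ τ ∈ earlyTopEvent n M := by
  simp [earlyTopEvent, mem_winEvent hM, Fin.exists_fin_succ', Fin.forall_fin_succ', (τ _).isLt.ne,
    hMn, val_apply_eq_iff_forall_le]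

lemma appendRank_castSucc_mem_winEvent (hM : 0 < M) (hMn : M ≤ n) (v : Fin n)
    (τ : Equiv.Perm (Fin n)) :
    appendRank v.castSucc τ ∈ winEvent (n + 1) M ↔ τ ∈ winEvent n M := by
  simp [mem_winEvent hM, Fin.exists_fin_succ', Fin.forall_fin_succ', v.isLt.ne, hMn.not_gt,
    val_castSucc_succAbove_eq_iff, (Fin.le_last _).not_gt]

lemma winEvent_self (hM : 0 < M) : winEvent M M = ∅ := by
  ext σ
  simp [mem_winEvent hM, Fin.is_lt _ |>.not_ge]

lemma earlyTopEvent_self (hM : 0 < M) : earlyTopEvent M M = univ := by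
  ext σ
  simpa [earlyTopEvent] using ⟨σ.symm ⟨M - 1, by omega⟩, by simp⟩

lemma mallowsProb_earlyTopEvent (hM : 0 < M) {q : ℝ} (hq : 0 < q) (k : ℕ) :
    mallowsProb (M + k) q (earlyTopEvent (M + k) M) =
      q ^ k * (qInteger q M / qInteger q (M + k)) := by
  induction k with
  | zero => simp [earlyTopEvent_self hM, mallowsProb_univ M hq, (qInteger_pos hq hM).ne']
  | succ k ih =>
    have := qInteger_pos hq (Nat.add_pos_left hM k)
    rw [← add_assoc, mallowsProb_succ q appendRank_castSucc_mem_earlyTopEvent (C := ∅)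
      (by simp [appendRank_last_notMem_earlyTopEvent]), mallowsProb_empty, ih]
    field_simp
    ring

lemma succProb_add (hM : 0 < M) {q : ℝ} (hq : 0 < q) (k : ℕ) :
    succProb (M + k) M q = q ^ k * (qInteger q M / qInteger q (M + k)) *
      (q⁻¹ * ∑ i ∈ range k, (qInteger q (M + i))⁻¹) := by
  rw [succProb]
  induction k with
  | zero => simp [winEvent_self hM, mallowsProb_empty]
  | succ k ih =>
    have := qInteger_pos hq (Nat.add_pos_left hM k)
    rw [← add_assoc, mallowsProb_succ q (appendRank_castSucc_mem_winEvent hM (by omega))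
      (appendRank_last_mem_winEvent hM (by omega)), mallowsProb_earlyTopEvent hM hq, ih,
      sum_range_succ]
    field_simp
    ring

end Events

section Asymptotics

open scoped Topology

variable {ι : Type*} {l : Filter ι} {x : ι → ℝ} {k M : ι → ℕ} {μ : ℝ}

lemma tendsto_one_sub_pow_exp (hx : Tendsto x l (𝓝 0))
    (hkx : Tendsto (fun i => k i * x i) l (𝓝 μ)) :
    Tendsto (fun i => (1 - x i) ^ k i) l (𝓝 (Real.exp (-μ))) := by
  have hx1 : ∀ᶠ i in l, 0 < 1 - x i := by
    filter_upwards [hx.eventually_lt_const one_pos] with i hi using sub_pos.2 hi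
  have hlower : Tendsto (fun i => -(k i * x i) / (1 - x i)) l (𝓝 (-μ)) := by
    simpa [Pi.div_def] using hkx.neg.div (hx.const_sub 1) (by norm_num)
  have hlog : Tendsto (fun i => k i * Real.log (1 - x i)) l (𝓝 (-μ)) := by
    refine tendsto_of_tendsto_of_tendsto_of_le_of_le' hlower hkx.neg ?_ ?_
    · filter_upwards [hx1] with i hi
      calc -(k i * x i) / (1 - x i) = k i * (1 - (1 - x i)⁻¹) := by field_simp; ring
        _ ≤ k i * Real.log (1 - x i) := by gcongr; exact Real.one_sub_inv_le_log_of_pos hi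
    · filter_upwards [hx1] with i hi
      calc k i * Real.log (1 - x i) ≤ k i * (1 - x i - 1) := by
            gcongr; exact Real.log_le_sub_one_of_pos hi
        _ = -(k i * x i) := by ring
  refine ((Real.continuous_exp.tendsto _).comp hlog).congr' ?_
  filter_upwards [hx1] with i hi
  rw [Function.comp_apply, Real.exp_nat_mul, Real.exp_log hi]

lemma tendsto_one_sub_pow_nhds_zero (hx : ∀ᶠ i in l, x i ≤ 1)
    (hMx : Tendsto (fun i => M i * x i) l atTop) :
    Tendsto (fun i => (1 - x i) ^ M i) l (𝓝 0) := by
  refine squeeze_zero' (hx.mono fun i hi => pow_nonneg (sub_nonneg.2 hi) _)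
    (hx.mono fun i hi => ?_) (Real.tendsto_exp_neg_atTop_nhds_zero.comp hMx)
  calc (1 - x i) ^ M i ≤ Real.exp (-x i) ^ M i :=
        pow_le_pow_left₀ (sub_nonneg.2 hi) (Real.one_sub_le_exp_neg _) _
    _ = Real.exp (-(M i * x i)) := by rw [← Real.exp_nat_mul, mul_neg]

lemma tendsto_mul_qInteger (hx : ∀ᶠ i in l, x i ≤ 1)
    (hMx : Tendsto (fun i => M i * x i) l atTop) :
    Tendsto (fun i => x i * qInteger (1 - x i) (M i)) l (𝓝 1) := by
  have hone : ∀ i, 1 - (1 - x i) ^ M i = x i * qInteger (1 - x i) (M i) := fun i => by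
    rw [← one_sub_mul_qInteger, sub_sub_cancel]
  simpa only [hone, sub_zero] using (tendsto_one_sub_pow_nhds_zero hx hMx).const_sub 1

lemma eventually_pos_of_tendsto_natCast_mul (hMx : Tendsto (fun i => M i * x i) l atTop) :
    ∀ᶠ i in l, 0 < M i ∧ 0 < x i := by
  filter_upwards [hMx.eventually_gt_atTop 0] with i hi
  have hxi : 0 < x i := pos_of_mul_pos_right hi (Nat.cast_nonneg _)
  exact ⟨Nat.cast_pos.1 (pos_of_mul_pos_left hi hxi.le), hxi⟩

variable (k) in
lemma tendsto_qInteger_div_qInteger_add (hx : ∀ᶠ i in l, x i ≤ 1)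
    (hMx : Tendsto (fun i => M i * x i) l atTop) :
    Tendsto (fun i => qInteger (1 - x i) (M i) / qInteger (1 - x i) (M i + k i)) l (𝓝 1) := by
  have hpos := eventually_pos_of_tendsto_natCast_mul hMx
  have hMkx : Tendsto (fun i => (M i + k i : ℕ) * x i) l atTop := by
    refine tendsto_atTop_mono' l ?_ hMx
    filter_upwards [hpos] with i ⟨_, hi⟩
    gcongr
    exact Nat.le_add_right _ _
  have h := (tendsto_mul_qInteger hx hMx).div (tendsto_mul_qInteger hx hMkx) one_ne_zero
  rw [div_one] at h
  refine h.congr' ?_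
  filter_upwards [hpos] with i ⟨_, hi⟩
  exact mul_div_mul_left _ _ hi.ne'

lemma one_sub_le_inv_qInteger {q : ℝ} (hq : 0 < q) {n : ℕ} (hn : 0 < n) :
    1 - q ≤ (qInteger q n)⁻¹ := by
  rw [← one_div, le_div_iff₀ (qInteger_pos hq hn), one_sub_mul_qInteger]
  exact sub_le_self _ (pow_nonneg hq.le n)

lemma tendsto_sum_inv_qInteger (hx : ∀ᶠ i in l, x i < 1)
    (hkx : Tendsto (fun i => k i * x i) l (𝓝 μ)) (hMx : Tendsto (fun i => M i * x i) l atTop) :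
    Tendsto (fun i => ∑ j ∈ range (k i), (qInteger (1 - x i) (M i + j))⁻¹) l (𝓝 μ) := by
  have hev := (eventually_pos_of_tendsto_natCast_mul hMx).and hx
  have hupper : Tendsto (fun i => k i * x i / (x i * qInteger (1 - x i) (M i))) l (𝓝 μ) := by
    simpa [Pi.div_def] using
      hkx.div (tendsto_mul_qInteger (hx.mono fun _ => le_of_lt) hMx) one_ne_zero
  refine tendsto_of_tendsto_of_tendsto_of_le_of_le' hkx hupper ?_ ?_
  · filter_upwards [hev] with i ⟨⟨hM, _⟩, hx1⟩
    simpa using card_nsmul_le_sum (range (k i)) _ _ fun j _ =>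
      one_sub_le_inv_qInteger (sub_pos.2 hx1) (Nat.add_pos_left hM j)
  · filter_upwards [hev] with i ⟨⟨hM, hx0⟩, hx1⟩
    have hq : 0 < 1 - x i := sub_pos.2 hx1
    calc ∑ j ∈ range (k i), (qInteger (1 - x i) (M i + j))⁻¹
      _ ≤ #(range (k i)) • (qInteger (1 - x i) (M i))⁻¹ :=
        sum_le_card_nsmul _ _ _ fun j _ =>
          inv_anti₀ (qInteger_pos hq hM) (qInteger_mono hq.le (Nat.le_add_right _ j))
      _ = k i * x i / (x i * qInteger (1 - x i) (M i)) := by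
        rw [card_range, nsmul_eq_mul, ← div_eq_mul_inv, mul_comm (k i : ℝ),
          mul_div_mul_left _ _ hx0.ne']

theorem tendsto_succProb (hx : Tendsto x l (𝓝 0))
    (hkx : Tendsto (fun i => k i * x i) l (𝓝 μ)) (hMx : Tendsto (fun i => M i * x i) l atTop) :
    Tendsto (fun i => succProb (M i + k i) (M i) (1 - x i)) l (𝓝 (μ * Real.exp (-μ))) := by
  have hx1 : ∀ᶠ i in l, x i < 1 := hx.eventually_lt_const one_pos
  have hinv : Tendsto (fun i => (1 - x i)⁻¹) l (𝓝 1) := by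
    simpa using (hx.const_sub 1).inv₀ (by norm_num)
  have hratio := tendsto_qInteger_div_qInteger_add k (hx1.mono fun _ => le_of_lt) hMx
  have hformula := ((tendsto_one_sub_pow_exp hx hkx).mul hratio).mul
    (hinv.mul (tendsto_sum_inv_qInteger hx1 hkx hMx))
  rw [mul_one, one_mul, mul_comm] at hformula
  refine hformula.congr' ?_
  filter_upwards [eventually_pos_of_tendsto_natCast_mul hMx, hx1] with i ⟨hM, _⟩ hi
  exact (succProb_add hM (sub_pos.2 hi) _).symm

end Asymptotics

lemma tendsto_natCast_mul_const_div_rpow {c α : ℝ} (hc : 0 < c) (hα : α < 1) :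
    Tendsto (fun n : ℕ => n * (c / (n : ℝ) ^ α)) atTop atTop := by
  have hpow := (tendsto_rpow_atTop (sub_pos.2 hα)).comp tendsto_natCast_atTop_atTop
  refine (hpow.const_mul_atTop hc).congr' ?_
  filter_upwards [eventually_gt_atTop 0] with n hn
  rw [Function.comp_apply, Real.rpow_sub (Nat.cast_pos.2 hn), Real.rpow_one]
  ring

theorem stmt_7 (c α lam : ℝ) (hc : 0 < c) (hα : α ∈ Set.Ioo (0 : ℝ) 1) (hlam : 0 < lam)
    (M : ℕ → ℕ) (hM : ∀ n, 2 ≤ n → 1 ≤ M n ∧ M n ≤ n - 1)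
    (hlim : Tendsto (fun n : ℕ => ((n : ℝ) - M n) / (n : ℝ) ^ α) atTop (nhds lam)) :
    Tendsto (fun n : ℕ => succProb n (M n) (1 - c / (n : ℝ) ^ α)) atTop
      (nhds (c * lam * Real.exp (-(c * lam)))) := by
  set x : ℕ → ℝ := fun n => c / (n : ℝ) ^ α
  have hle : ∀ᶠ n in atTop, M n ≤ n := by
    filter_upwards [eventually_ge_atTop 2] with n hn using (hM n hn).2.trans (Nat.sub_le n 1)
  have hx : Tendsto x atTop (nhds 0) :=
    ((tendsto_rpow_atTop hα.1).comp tendsto_natCast_atTop_atTop).const_div_atTop c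
  have hkx : Tendsto (fun n => (n - M n : ℕ) * x n) atTop (nhds (c * lam)) := by
    refine (hlim.const_mul c).congr' ?_
    filter_upwards [hle] with n hn
    rw [Nat.cast_sub hn]
    ring
  have hMx : Tendsto (fun n => M n * x n) atTop atTop := by
    refine ((tendsto_natCast_mul_const_div_rpow hc hα.2).atTop_add hkx.neg).congr' ?_
    filter_upwards [hle] with n hn
    rw [Nat.cast_sub hn]
    ring
  refine (tendsto_succProb hx hkx hMx).congr' ?_
  filter_upwards [hle] with n hn
  rw [Nat.add_sub_of_le hn]
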